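/- Let k be a field, n ≥ 2, let b ∈ GL(n, k) be an invertible lower-triangular matrix, and let σ be a permutation of {1, …, n}. Consider the element ω = (b·e_{σ(2)}) ∧ (b·e_{σ(3)}) ∧ ⋯ ∧ (b·e_{σ(n)}) of the (n−1)-st exterior power ⋀^{n−1}(k^n), expressed in the basis {e_{i_1} ∧ ⋯ ∧ e_{i_{n−1}} : i_1 < ⋯ < i_{n−1}} induced by the standard basis e_1, …, e_n of k^n. Then the coefficient of e_1 ∧ e_2 ∧ ⋯ ∧ e_{n−1} in ω is nonzero if and only if σ(1) = n. -/

import Mathlib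

/- STATEMENT 7: the coefficient of `e_1 ∧ ⋯ ∧ e_{n−1}` in
   `(b·e_{σ(2)}) ∧ ⋯ ∧ (b·e_{σ(n)})` is nonzero iff `σ(1) = n`.

   We use 0-based indexing: `Fin n` replaces `{1, …, n}`, the wedge
   `(b·e_{σ(2)}) ∧ ⋯ ∧ (b·e_{σ(n)})` becomes the ordered product over the indices
   `1, …, n−1` of `Fin n`, the basis wedge `e_1 ∧ ⋯ ∧ e_{n−1}` corresponds to the
   subset `{0, …, n−2}`, and the condition `σ(1) = n` becomes `σ 0 = n−1`.
   Since this Mathlib version has no bundled basis of exterior powers, "the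
   coefficient of `e_1 ∧ ⋯ ∧ e_{n−1}` in ω" is captured by saying: ω admits an
   expression as a linear combination of the wedges `e_{i_1} ∧ ⋯ ∧ e_{i_{n−1}}`
   (`i_1 < ⋯ < i_{n−1}`), and in any such expression the coefficient at
   `{0, …, n−2}` is nonzero iff `σ 0 = n−1` (these wedges are linearly
   independent, so the coefficient is well defined). -/

namespace Stmt7

open ExteriorAlgebra

/-- The `i`-th standard basis vector of `k^n`. -/
noncomputable def stdBasis (k : Type*) [Field k] (n : ℕ) (i : Fin n) : Fin n → k :=
  Pi.single i 1

/-- The basis wedge `e_{i_1} ∧ ⋯ ∧ e_{i_r}` attached to a subset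
`S = {i_1 < ⋯ < i_r}` of `Fin n`, as an element of the exterior algebra
(it lies in the `r`-th exterior power). -/
noncomputable def basisWedge (k : Type*) [Field k] (n : ℕ) (S : Finset (Fin n)) :
    ExteriorAlgebra k (Fin n → k) :=
  ((S.sort (· ≤ ·)).map fun i => ι k (stdBasis k n i)).prod

/-!
The coefficient of a basis wedge in a wedge of columns of `b` is a maximal minor of those columns.
For `e_1 ∧ ⋯ ∧ e_{n−1}` the minor omits the last row of `b`. If `σ(1) ≠ n`, the column
`b·e_n`, which vanishes outside the last row, is among those taken, so the minor is zero. If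
`σ(1) = n`, the minor is up to sign the leading principal minor of size `n − 1`, which is the
product of the first `n − 1` diagonal entries of `b`.
-/

section Basis

variable {R M I : Type*} [CommRing R] [AddCommGroup M] [Module R M] [LinearOrder I]
  (B : Module.Basis I R M)

theorem prod_map_sort_ι_eq_basis (S : Finset I) :
    ((S.sort (· ≤ ·)).map fun i => ι R (B i)).prod = B.ExteriorAlgebra S := by
  rw [basis_apply_ofCard B rfl, ιMulti_family, ιMulti_apply]
  congr 1
  refine List.ext_getElem (by simp) fun i _ _ => ?_
  rw [List.getElem_map, List.getElem_ofFn]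
  rfl

theorem basis_repr_coe_exteriorPower {m : ℕ} (x : ⋀[R]^m M) (s : Set.powersetCard I m) :
    B.ExteriorAlgebra.repr (x : ExteriorAlgebra R M) s = (B.exteriorPower m).repr x s := by
  suffices h : B.ExteriorAlgebra.coord s ∘ₗ (⋀[R]^m M).subtype = (B.exteriorPower m).coord s from
    LinearMap.congr_fun h x
  refine (B.exteriorPower m).ext fun t => ?_
  simp only [LinearMap.comp_apply, Submodule.subtype_apply, Module.Basis.coord_apply,
    ← basis_eq_coe_basis, Module.Basis.repr_self, Finsupp.single_apply, Subtype.ext_iff]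

theorem basis_repr_ιMulti {m : ℕ} (v : Fin m → M) {S : Finset I} (hS : S.card = m) :
    B.ExteriorAlgebra.repr (ιMulti R m v) S =
      (Matrix.of fun i j => B.coord (S.orderEmbOfFin hS j) (v i)).det := by
  have h := basis_repr_coe_exteriorPower B (exteriorPower.ιMulti R m v) ⟨S, hS⟩
  rwa [exteriorPower.basis_repr_apply, exteriorPower.ιMultiDual_apply_ιMulti] at h

variable [Fintype I]

theorem sum_card_eq_basis_repr_smul {m : ℕ} (x : ⋀[R]^m M) :
    ∑ S : Finset I with S.card = m,
      B.ExteriorAlgebra.repr (x : ExteriorAlgebra R M) S • B.ExteriorAlgebra S = x := by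
  calc
    _ = ∑ s : Set.powersetCard I m, B.ExteriorAlgebra.repr x s • B.ExteriorAlgebra s :=
      Finset.sum_subtype _ (by simp [Set.powersetCard.mem_iff]) _
    _ = ((∑ s, (B.exteriorPower m).repr x s • B.exteriorPower m s : ⋀[R]^m M) :
          ExteriorAlgebra R M) := by
      simp only [AddSubmonoidClass.coe_finsetSum, Submodule.coe_smul, basis_repr_coe_exteriorPower,
        basis_eq_coe_basis]
    _ = x := by rw [Module.Basis.sum_repr]

end Basis

section Minor

variable {R : Type*} [CommRing R]

theorem basisFun_repr_ιMulti_mulVec_single {ι κ : Type*} [Finite ι] [LinearOrder ι] [Fintype κ]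
    [DecidableEq κ] (b : Matrix ι κ R) {m : ℕ} (f : Fin m → κ) {S : Finset ι} (hS : S.card = m) :
    (Pi.basisFun R ι).ExteriorAlgebra.repr (ιMulti R m fun t => b.mulVec (Pi.single (f t) 1)) S =
      (b.submatrix (S.orderEmbOfFin hS) f).det := by
  rw [basis_repr_ιMulti _ _ hS, ← Matrix.det_transpose]
  congr 1
  ext i j
  simp

variable {m : ℕ} {b : Matrix (Fin (m + 1)) (Fin (m + 1)) R}

theorem orderEmbOfFin_Iio_last (h : (Finset.Iio (Fin.last m)).card = m) :
    ⇑((Finset.Iio (Fin.last m)).orderEmbOfFin h) = Fin.castSucc :=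
  (Finset.orderEmbOfFin_unique h (fun i => Finset.mem_Iio.mpr i.castSucc_lt_last)
    Fin.strictMono_castSucc).symm

theorem filter_val_add_one_lt_eq_Iio_last :
    Finset.univ.filter (fun i : Fin (m + 1) => i.val + 1 < m + 1) = Finset.Iio (Fin.last m) := by
  ext i
  simp only [Finset.mem_filter_univ, Finset.mem_Iio, Fin.lt_def, Fin.val_last]
  omega

theorem exists_perm_eq_castSucc_comp {f : Fin m → Fin (m + 1)} (hf : Function.Injective f)
    (hlast : ∀ t, f t ≠ Fin.last m) : ∃ τ : Equiv.Perm (Fin m), f = Fin.castSucc ∘ τ := by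
  have hinj : Function.Injective fun t => (f t).castPred (hlast t) := fun _ _ h =>
    hf (Fin.castPred_inj.mp h)
  exact ⟨.ofBijective _ (Finite.injective_iff_bijective.mp hinj), by ext; simp⟩

theorem det_submatrix_castSucc_eq_zero (hb : b.IsLowerTriangular) {f : Fin m → Fin (m + 1)}
    {t : Fin m} (ht : f t = Fin.last m) : (b.submatrix Fin.castSucc f).det = 0 := by
  refine Matrix.det_eq_zero_of_column_eq_zero t fun i => ?_
  rw [Matrix.submatrix_apply, ht]
  exact hb i.castSucc_lt_last

theorem det_submatrix_castSucc_comp_perm (hb : b.IsLowerTriangular) (τ : Equiv.Perm (Fin m)) :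
    (b.submatrix Fin.castSucc (Fin.castSucc ∘ τ)).det =
      Equiv.Perm.sign τ * ∏ i : Fin m, b i.castSucc i.castSucc := by
  have hlead : (b.submatrix Fin.castSucc Fin.castSucc).IsLowerTriangular := fun _ _ hij =>
    hb (Fin.castSucc_lt_castSucc_iff.mpr hij)
  have h := Matrix.det_permute' τ (b.submatrix Fin.castSucc Fin.castSucc)
  rwa [Matrix.det_of_isLowerTriangular _ hlead] at h

theorem det_submatrix_castSucc_perm_succ_ne_zero_iff (hb : b.IsLowerTriangular)
    (hdiag : ∏ i : Fin m, b i.castSucc i.castSucc ≠ 0) (σ : Equiv.Perm (Fin (m + 1))) :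
    (b.submatrix Fin.castSucc (σ ∘ Fin.succ)).det ≠ 0 ↔ σ 0 = Fin.last m := by
  constructor
  · contrapose!
    intro h0
    obtain ⟨i, hi⟩ := σ.surjective (Fin.last m)
    obtain ⟨t, rfl⟩ := Fin.exists_succ_eq.mpr fun h : i = 0 => h0 (h ▸ hi)
    exact det_submatrix_castSucc_eq_zero hb hi
  · intro h0
    have hlast (t : Fin m) : σ t.succ ≠ Fin.last m := fun h =>
      t.succ_ne_zero (σ.injective (h.trans h0.symm))
    obtain ⟨τ, hτ⟩ := exists_perm_eq_castSucc_comp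
      (σ.injective.comp (Fin.succ_injective m)) hlast
    rw [hτ, det_submatrix_castSucc_comp_perm hb τ]
    rcases Int.units_eq_one_or (Equiv.Perm.sign τ) with h | h <;> simpa [h] using hdiag

theorem isUnit_prod_castSucc_diag (hb : b.IsLowerTriangular) (hunit : IsUnit b) :
    IsUnit (∏ i : Fin m, b i.castSucc i.castSucc) := by
  have hdet : IsUnit b.det := b.isUnit_iff_isUnit_det.mp hunit
  rw [Matrix.det_of_isLowerTriangular b hb, Fin.prod_univ_castSucc] at hdet
  exact isUnit_of_mul_isUnit_left hdet

theorem coeff_nonzero_iff_general (hb : b.IsLowerTriangular)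
    (hdiag : ∏ i : Fin m, b i.castSucc i.castSucc ≠ 0) (σ : Equiv.Perm (Fin (m + 1)))
    {ω : ExteriorAlgebra R (Fin (m + 1) → R)}
    (hω : ω = ιMulti R m fun t => b.mulVec (Pi.single (σ t.succ) 1)) :
    (∃ coef : Finset (Fin (m + 1)) → R,
      ω = ∑ S with S.card = m, coef S • (Pi.basisFun R (Fin (m + 1))).ExteriorAlgebra S) ∧
    ∀ coef : Finset (Fin (m + 1)) → R,
      ω = ∑ S with S.card = m, coef S • (Pi.basisFun R (Fin (m + 1))).ExteriorAlgebra S →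
      (coef (Finset.Iio (Fin.last m)) ≠ 0 ↔ σ 0 = Fin.last m) := by
  set B := (Pi.basisFun R (Fin (m + 1))).ExteriorAlgebra
  have hcard : (Finset.Iio (Fin.last m)).card = m := by simp
  have hminor : B.repr ω (Finset.Iio (Fin.last m)) =
      (b.submatrix Fin.castSucc (σ ∘ Fin.succ)).det := by
    rw [hω, basisFun_repr_ιMulti_mulVec_single b _ hcard, orderEmbOfFin_Iio_last]
    rfl
  refine ⟨⟨B.repr ω, ?_⟩, fun coef hcoef => ?_⟩
  · rw [hω]
    exact (sum_card_eq_basis_repr_smul _ (exteriorPower.ιMulti R m _)).symm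
  · have hrepr : B.repr ω (Finset.Iio (Fin.last m)) = coef (Finset.Iio (Fin.last m)) := by
      simp [hcoef, Finsupp.single_apply]
    rw [← hrepr, hminor]
    exact det_submatrix_castSucc_perm_succ_ne_zero_iff hb hdiag σ

end Minor

theorem basisWedge_eq_basisFun (k : Type*) [Field k] (n : ℕ) (S : Finset (Fin n)) :
    basisWedge k n S = (Pi.basisFun k (Fin n)).ExteriorAlgebra S := by
  simp only [← prod_map_sort_ι_eq_basis, Pi.basisFun_apply, basisWedge, stdBasis]

theorem coeff_nonzero_iff (k : Type*) [Field k] (n : ℕ) (hn : 2 ≤ n)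
    (b : Matrix (Fin n) (Fin n) k) (hb : IsUnit b)
    (hbtri : ∀ i j : Fin n, i < j → b i j = 0)  -- lower-triangular
    (σ : Equiv.Perm (Fin n)) :
    -- ω = (b·e_{σ(2)}) ∧ ⋯ ∧ (b·e_{σ(n)})
    ∀ ω : ExteriorAlgebra k (Fin n → k),
      ω = (List.ofFn fun t : Fin (n - 1) =>
            ι k (b.mulVec (stdBasis k n (σ ⟨t.val + 1, by omega⟩)))).prod →
      (∃ coef : Finset (Fin n) → k,
          ω = ∑ S ∈ Finset.univ.filter (fun S : Finset (Fin n) => S.card = n - 1),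
                coef S • basisWedge k n S) ∧
      (∀ coef : Finset (Fin n) → k,
          ω = (∑ S ∈ Finset.univ.filter (fun S : Finset (Fin n) => S.card = n - 1),
                coef S • basisWedge k n S) →
          (coef (Finset.univ.filter (fun i : Fin n => i.val + 1 < n)) ≠ 0 ↔
            σ ⟨0, by omega⟩ = ⟨n - 1, by omega⟩)) := by
  obtain ⟨m, rfl⟩ := Nat.exists_eq_add_of_le' (one_le_two.trans hn)
  simp only [basisWedge_eq_basisFun, filter_val_add_one_lt_eq_Iio_last]
  exact fun ω hω => coeff_nonzero_iff_general hbtri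
    (isUnit_prod_castSucc_diag hbtri hb).ne_zero σ (hω.trans (ιMulti_apply _).symm)

end Stmt7
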